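/- Let S and A be finite nonempty types, P : S → A → PMF S a transition kernel, γ a real number with 0 ≤ γ < 1, and r : S → A → ℝ a reward function. For a deterministic policy μ : S → A (identified with the stochastic policy s ↦ PMF.pure (μ s)) let Q^μ denote the unique solution of Q^μ(s,a) = r(s,a) + γ · ∑_{s'} (P s a) s' · Q^μ(s', μ(s')). Let (μ_k) be any sequence of deterministic policies starting from an arbitrary μ₀ and satisfying the greedy improvement rule μ_{k+1}(s) ∈ argmax_{a ∈ A} Q^{μ_k}(s,a) for all s and k. Then Q^{μ_{k+1}}(s,a) ≥ Q^{μ_k}(s,a) for all k and all (s,a), and there exists N such that for all k ≥ N, Q^{μ_k} = Q^{μ_N} and Q^{μ_N}(s,a) ≥ Q^{π}(s,a) for every policy π : S → PMF A and every (s,a). -/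

import Mathlib

open scoped BigOperators

/-! The Bellman operator `T_π` satisfies Blackwell's conditions, so by the maximum principle its
fixed point `Q^π` dominates every `Q ≤ T_π Q` and is dominated by every `Q ≥ T_π Q`. If `μ` is
greedy for `Q`, then `T_μ Q` is the largest of all the `T_π Q`. Hence a greedy step turns
`Q = T_π Q` into `Q ≤ T_μ Q`, which gives improvement. There are only finitely many deterministic
policies, so the improving Q-functions stabilize, and then `Q = T_μ Q ≥ T_π Q` for every `π`, which
gives optimality. -/

open Function

theorem exists_eventually_eq_of_monotone_of_finite_range {α : Type*} [PartialOrder α] {u : ℕ → α}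
    (hu : Monotone u) (hfin : (Set.range u).Finite) : ∃ N, ∀ k, N ≤ k → u k = u N := by
  have : Finite (Set.range u) := hfin
  obtain ⟨N, hN⟩ := WellFoundedGT.monotone_chain_condition
    (⟨Set.rangeFactorization u, fun _ _ hmn => hu hmn⟩ : ℕ →o Set.range u)
  exact ⟨N, fun k hk => congrArg Subtype.val (hN k hk).symm⟩

theorem finite_range_of_factorsThrough {α β δ : Type*} [Finite β] {g : α → δ} {f : α → β}
    (h : g.FactorsThrough f) : (Set.range g).Finite := by
  rcases isEmpty_or_nonempty δ with _ | _
  · exact Set.toFinite _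
  · obtain ⟨e, rfl⟩ := (factorsThrough_iff g).1 h
    exact (Set.finite_range e).subset (Set.range_comp_subset_range f e)

/-- Blackwell's conditions on an operator on functions: monotonicity, and discounting of nonnegative
constant shifts by the factor `γ`. Together they replace the contraction property in comparison
arguments. -/
structure IsBlackwell {X R : Type*} [Semiring R] [PartialOrder R] (γ : R)
    (T : (X → R) → X → R) : Prop where
  monotone : Monotone T
  apply_add_const_le (f : X → R) {c : R} (hc : 0 ≤ c) (x : X) :
    T (fun y => f y + c) x ≤ T f x + γ * c

namespace IsBlackwell

variable {X R : Type*} [Finite X] [Ring R] [LinearOrder R] [IsStrictOrderedRing R] {γ : R}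
  {T : (X → R) → X → R} {f g : X → R}

theorem le_of_le_apply_of_apply_le (hT : IsBlackwell γ T) (hγ : γ < 1) (hf : f ≤ T f)
    (hg : T g ≤ g) : f ≤ g := by
  intro x₀
  have : Nonempty X := ⟨x₀⟩
  obtain ⟨x, hmax⟩ := Finite.exists_max fun y => f y - g y
  suffices hle : f x - g x ≤ 0 from sub_nonpos.1 ((hmax x₀).trans hle)
  by_contra! hpos
  have hshift : f ≤ fun y => g y + (f x - g x) := fun y => sub_le_iff_le_add'.1 (hmax y)
  have hdiscount : f x - g x ≤ γ * (f x - g x) := sub_le_iff_le_add'.2 <|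
    calc f x ≤ T f x := hf x
      _ ≤ T (fun y => g y + (f x - g x)) x := hT.monotone hshift x
      _ ≤ T g x + γ * (f x - g x) := hT.apply_add_const_le g hpos.le x
      _ ≤ g x + γ * (f x - g x) := add_le_add_left (hg x) _
  exact hdiscount.not_gt (mul_lt_of_lt_one_left hpos hγ)

theorem eq_of_isFixedPt (hT : IsBlackwell γ T) (hγ : γ < 1) (hf : IsFixedPt T f)
    (hg : IsFixedPt T g) : f = g :=
  le_antisymm (hT.le_of_le_apply_of_apply_le hγ hf.ge hg.le)
    (hT.le_of_le_apply_of_apply_le hγ hg.ge hf.le)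

end IsBlackwell

/-- The expectation of a real function on a finite type. It is a finite sum rather than an integral
so that no measurable structure is needed. -/
noncomputable def expectation {α : Type*} [Fintype α] (p : PMF α) (f : α → ℝ) : ℝ :=
  ∑ a, (p a).toReal * f a

section Expectation

variable {α : Type*} [Fintype α]

theorem expectation_pure (a : α) (f : α → ℝ) : expectation (PMF.pure a) f = f a := by
  classical
  simp [expectation, PMF.pure_apply, apply_ite ENNReal.toReal]

theorem expectation_const (p : PMF α) (c : ℝ) : expectation p (fun _ => c) = c := by
  have hsum : ∑ a, (p a).toReal = 1 := by
    rw [← ENNReal.toReal_sum fun a _ => p.apply_ne_top a, ← tsum_fintype (L := .unconditional _),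
      p.tsum_coe, ENNReal.toReal_one]
  rw [expectation, ← Finset.sum_mul, hsum, one_mul]

theorem expectation_add_const (p : PMF α) (f : α → ℝ) (c : ℝ) :
    expectation p (fun a => f a + c) = expectation p f + c := by
  nth_rw 2 [← expectation_const p c]
  simp only [expectation, mul_add, Finset.sum_add_distrib]

theorem expectation_mono (p : PMF α) : Monotone (expectation p) := fun _ _ hfg =>
  Finset.sum_le_sum fun a _ => mul_le_mul_of_nonneg_left (hfg a) ENNReal.toReal_nonneg

theorem expectation_le_of_forall_le (p : PMF α) {f : α → ℝ} {c : ℝ} (hf : ∀ a, f a ≤ c) :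
    expectation p f ≤ c :=
  (expectation_mono p hf).trans_eq (expectation_const p c)

end Expectation

/-- The Bellman operator of a stochastic policy `π`, acting on state-action functions. The
Q-function of `π` is its fixed point, and a deterministic policy `μ` enters as `PMF.pure ∘ μ`. -/
noncomputable def bellmanOperator {S A : Type*} [Fintype S] [Fintype A] (P : S → A → PMF S)
    (γ : ℝ) (r : S → A → ℝ) (π : S → PMF A) (Q : S × A → ℝ) : S × A → ℝ := fun x =>
  r x.1 x.2 + γ * expectation (P x.1 x.2) fun s' => expectation (π s') fun a' => Q (s', a')

/-- The deterministic policy `μ` is greedy for `Q`: in every state it selects an action maximizing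
`Q`. Ties may be broken arbitrarily. -/
def IsGreedy {S A : Type*} (Q : S × A → ℝ) (μ : S → A) : Prop :=
  ∀ s a, Q (s, a) ≤ Q (s, μ s)

section BellmanOperator

variable {S A : Type*} [Fintype S] [Fintype A] {P : S → A → PMF S} {γ : ℝ} {r : S → A → ℝ}
  {π : S → PMF A} {μ : S → A} {Q Q' : S × A → ℝ}

theorem isBlackwell_bellmanOperator (hγ0 : 0 ≤ γ) : IsBlackwell γ (bellmanOperator P γ r π) where
  monotone _ _ hQ x := by
    unfold bellmanOperator
    gcongr
    exact expectation_mono _ fun s' => expectation_mono _ fun a' => hQ (s', a')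
  apply_add_const_le Q c _ x := by
    simp only [bellmanOperator, expectation_add_const, mul_add, add_assoc, le_refl]

theorem isFixedPt_bellmanOperator_pure_iff :
    IsFixedPt (bellmanOperator P γ r (PMF.pure ∘ μ)) Q ↔
      ∀ s a, Q (s, a) = r s a + γ * ∑ s', (P s a s').toReal * Q (s', μ s') := by
  simp only [IsFixedPt, funext_iff, Prod.forall, bellmanOperator, comp_apply, expectation_pure,
    eq_comm]
  rfl

theorem IsGreedy.bellmanOperator_le (hμ : IsGreedy Q μ) (hγ0 : 0 ≤ γ) (π : S → PMF A) :
    bellmanOperator P γ r π Q ≤ bellmanOperator P γ r (PMF.pure ∘ μ) Q := by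
  intro x
  unfold bellmanOperator
  gcongr
  refine expectation_mono _ fun s' => ?_
  rw [comp_apply, expectation_pure]
  exact expectation_le_of_forall_le _ (hμ s')

theorem IsGreedy.policy_improvement (hμ : IsGreedy Q μ) (hγ0 : 0 ≤ γ) (hγ1 : γ < 1)
    (hQ : IsFixedPt (bellmanOperator P γ r π) Q)
    (hQ' : IsFixedPt (bellmanOperator P γ r (PMF.pure ∘ μ)) Q') : Q ≤ Q' :=
  (isBlackwell_bellmanOperator hγ0).le_of_le_apply_of_apply_le hγ1
    (hQ.ge.trans (hμ.bellmanOperator_le hγ0 π)) hQ'.le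

theorem IsGreedy.le_of_isFixedPt_pure (hμ : IsGreedy Q μ) (hγ0 : 0 ≤ γ) (hγ1 : γ < 1)
    (hQ : IsFixedPt (bellmanOperator P γ r (PMF.pure ∘ μ)) Q)
    (hQ' : IsFixedPt (bellmanOperator P γ r π) Q') : Q' ≤ Q :=
  (isBlackwell_bellmanOperator hγ0).le_of_le_apply_of_apply_le hγ1 hQ'.ge
    ((hμ.bellmanOperator_le hγ0 π).trans hQ.le)

theorem finite_range_of_isFixedPt_bellmanOperator {ι : Type*} {μ : ι → S → A}
    {Q : ι → S × A → ℝ} (hγ0 : 0 ≤ γ) (hγ1 : γ < 1)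
    (hQ : ∀ i, IsFixedPt (bellmanOperator P γ r (PMF.pure ∘ μ i)) (Q i)) :
    (Set.range Q).Finite :=
  finite_range_of_factorsThrough (f := μ) fun i j hij =>
    (isBlackwell_bellmanOperator hγ0).eq_of_isFixedPt hγ1 (hQ i) (hij ▸ hQ j)

end BellmanOperator

/-- Finite convergence of greedy policy iteration: given deterministic policies
`μ k` with Q-functions `Q k`, where each `μ (k+1)` is greedy with respect to
`Q k`, the Q-functions improve monotonically, and after finitely many steps the
Q-function stabilizes at a value dominating the Q-function of every policy. -/
theorem greedy_policy_iteration_converges {S A : Type*}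
    [Fintype S] [Nonempty S] [Fintype A] [Nonempty A]
    (P : S → A → PMF S) (γ : ℝ) (hγ0 : 0 ≤ γ) (hγ1 : γ < 1)
    (r : S → A → ℝ)
    (μ : ℕ → S → A) (Q : ℕ → S × A → ℝ)
    (hQ : ∀ (k : ℕ) (s : S) (a : A),
      Q k (s, a) = r s a + γ * ∑ s' : S, ((P s a) s').toReal *
        Q k (s', μ k s'))
    (hgreedy : ∀ (k : ℕ) (s : S) (a : A),
      Q k (s, μ (k + 1) s) ≥ Q k (s, a)) :
    (∀ (k : ℕ) (s : S) (a : A), Q (k + 1) (s, a) ≥ Q k (s, a)) ∧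
    ∃ N : ℕ,
      (∀ k : ℕ, N ≤ k → Q k = Q N) ∧
      ∀ (π : S → PMF A) (Qπ : S × A → ℝ),
        (∀ (s : S) (a : A),
          Qπ (s, a) = r s a + γ * ∑ s' : S, ((P s a) s').toReal *
            ∑ a' : A, ((π s') a').toReal * Qπ (s', a')) →
        ∀ (s : S) (a : A), Q N (s, a) ≥ Qπ (s, a) := by
  have hfix (k : ℕ) : IsFixedPt (bellmanOperator P γ r (PMF.pure ∘ μ k)) (Q k) :=
    isFixedPt_bellmanOperator_pure_iff.2 (hQ k)
  have hμ (k : ℕ) : IsGreedy (Q k) (μ (k + 1)) := hgreedy k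
  have hmono : Monotone Q := monotone_nat_of_le_succ fun k =>
    (hμ k).policy_improvement hγ0 hγ1 (hfix k) (hfix (k + 1))
  obtain ⟨N, hN⟩ := exists_eventually_eq_of_monotone_of_finite_range hmono
    (finite_range_of_isFixedPt_bellmanOperator hγ0 hγ1 hfix)
  have hfixN : IsFixedPt (bellmanOperator P γ r (PMF.pure ∘ μ (N + 1))) (Q N) :=
    hN (N + 1) N.le_succ ▸ hfix (N + 1)
  refine ⟨fun k s a => hmono k.le_succ (s, a), N, hN, fun π Qπ hQπ s a => ?_⟩
  have hfixπ : IsFixedPt (bellmanOperator P γ r π) Qπ := funext fun x => (hQπ x.1 x.2).symm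
  exact (hμ N).le_of_isFixedPt_pure hγ0 hγ1 hfixN hfixπ (s, a)
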